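/- Under the two-dimensional setup, ∂_t u(r,t) ≥ 0 for all (r,t) ∈ [0,r₀] × [0,T), and ∂_t u(r,t) > 0 for all (r,t) ∈ [0,r₀] × (0,T). Equivalently, the Gauss curvature satisfies K_{g(t)} ≤ −1 on the closed ball for all t ∈ [0,T), with strict inequality K_{g(t)} < −1 for t ∈ (0,T). -/

import Mathlib

open Real MeasureTheory Filter

/-- Partial derivative in the radial variable `r`. -/
noncomputable def pr (f : ℝ → ℝ → ℝ) (r t : ℝ) : ℝ := deriv (fun x => f x t) r

/-- Partial derivative in the time variable `t`. -/
noncomputable def pt (f : ℝ → ℝ → ℝ) (r t : ℝ) : ℝ := deriv (fun τ => f r τ) t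

/-- The Gauss curvature `K_g = -e^{-2u}(∂ᵣ²u + coth(r)·∂ᵣu + 1)` of the conformal
metric `g = e^{2u}(dr² + sinh²(r) dθ²)`. -/
noncomputable def K2 (u : ℝ → ℝ → ℝ) (r t : ℝ) : ℝ :=
  -Real.exp (-2 * u r t) *
    (deriv (fun x => pr u x t) r + Real.cosh r / Real.sinh r * pr u r t + 1)

/-- Setup: rotationally symmetric normalized Ricci flow `∂ₜg = -2(K_g + 1)g`,
`g(t) = e^{2u(r,t)}(dr² + sinh²(r) dθ²)`, on the closed geodesic ball of radius `r₀`
in the hyperbolic plane, starting from the hyperbolic metric, with prescribed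
non-decreasing geodesic curvature `η(t)` on the boundary, for `t ∈ [0,T)`, `T ∈ (0,∞]`. -/
structure Setup2 (r₀ : ℝ) (T : EReal) (u : ℝ → ℝ → ℝ) (η : ℝ → ℝ) : Prop where
  hr₀ : 0 < r₀
  hT : 0 < T
  hu_smooth : ContDiff ℝ (⊤ : ℕ∞) (Function.uncurry u)
  hu_origin : ∀ t : ℝ, 0 ≤ t → (t : EReal) < T → pr u 0 t = 0
  hu_evol : ∀ r t : ℝ, r ∈ Set.Ioc 0 r₀ → 0 ≤ t → (t : EReal) < T →
    pt u r t = Real.exp (-2 * u r t) *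
      (deriv (fun x => pr u x t) r + Real.cosh r / Real.sinh r * pr u r t + 1) - 1
  hu_init : ∀ r ∈ Set.Icc 0 r₀, u r 0 = 0
  hbdry : ∀ t : ℝ, 0 ≤ t → (t : EReal) < T →
    pr u r₀ t + Real.cosh r₀ / Real.sinh r₀ = η t * Real.exp (u r₀ t)
  hη_smooth : ContDiff ℝ 2 η
  hη_mono : ∀ s t : ℝ, 0 ≤ s → s ≤ t → η s ≤ η t
  hη_init : η 0 = Real.cosh r₀ / Real.sinh r₀
  hη_deriv0 : deriv η 0 = 0
  hη_incr : ∃ t₀ > 0, ∀ t : ℝ, 0 < t → t < t₀ → 0 < deriv η t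

/-!
Differentiating the flow in time, `v = ∂ₜu` solves a linear parabolic problem whose diffusion
`e^{-2u}`, drift `coth r` and potential `-2(∂ₜu + 1)` are regarded as given, with the Robin
condition `∂ᵣv = η' e^u + η e^u v` at `r = r₀` and `v = 0` at `t = 0`. Its supersolutions obey a
comparison principle: if `v - φ` were negative somewhere, then `e^{-θ} (v - φ)` with
`θ = A t + B (r - r₀/2)²` would have a negative minimum, which is impossible at `r = 0` and `r = r₀`
once `B` is large, and at all other points once `A` is large.

Comparison with `0` gives `v ≥ 0`, since `η' ≥ 0`. As long as `η' > 0`, comparison with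
`ε (e^{α (r - r₀) + β (t - s)} - 1)` shows that `v` becomes positive immediately, and comparison
with a decaying exponential in `t` shows that it stays positive afterwards.
-/

open Set Function

section PartialDerivatives

variable {f g : ℝ → ℝ → ℝ}

lemma hasDerivAt_fderiv_fst (hf : Differentiable ℝ (uncurry f)) (r t : ℝ) :
    HasDerivAt (fun x => f x t) (fderiv ℝ (uncurry f) (r, t) (1, 0)) r :=
  HasFDerivAt.comp_hasDerivAt (f := fun x => (x, t)) r (hf (r, t)).hasFDerivAt
    ((hasDerivAt_id r).prodMk (hasDerivAt_const r t))

lemma hasDerivAt_fderiv_snd (hf : Differentiable ℝ (uncurry f)) (r t : ℝ) :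
    HasDerivAt (fun τ => f r τ) (fderiv ℝ (uncurry f) (r, t) (0, 1)) t :=
  HasFDerivAt.comp_hasDerivAt (f := fun τ => (r, τ)) t (hf (r, t)).hasFDerivAt
    ((hasDerivAt_const t r).prodMk (hasDerivAt_id t))

lemma hasDerivAt_pr (hf : Differentiable ℝ (uncurry f)) (r t : ℝ) :
    HasDerivAt (fun x => f x t) (pr f r t) r :=
  (hasDerivAt_fderiv_fst hf r t).differentiableAt.hasDerivAt

lemma hasDerivAt_pt (hf : Differentiable ℝ (uncurry f)) (r t : ℝ) :
    HasDerivAt (fun τ => f r τ) (pt f r t) t :=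
  (hasDerivAt_fderiv_snd hf r t).differentiableAt.hasDerivAt

lemma uncurry_pr_eq_fderiv (hf : Differentiable ℝ (uncurry f)) :
    uncurry (pr f) = fun p => fderiv ℝ (uncurry f) p (1, 0) :=
  funext fun p => (hasDerivAt_fderiv_fst hf p.1 p.2).deriv

lemma uncurry_pt_eq_fderiv (hf : Differentiable ℝ (uncurry f)) :
    uncurry (pt f) = fun p => fderiv ℝ (uncurry f) p (0, 1) :=
  funext fun p => (hasDerivAt_fderiv_snd hf p.1 p.2).deriv

lemma contDiff_pr {m n : WithTop ℕ∞} (hf : ContDiff ℝ n (uncurry f)) (hmn : m + 1 ≤ n) :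
    ContDiff ℝ m (uncurry (pr f)) := by
  have hn : n ≠ 0 := (one_pos.trans_le (le_add_self.trans hmn)).ne'
  rw [uncurry_pr_eq_fderiv (hf.differentiable hn)]
  exact (hf.fderiv_right hmn).clm_apply contDiff_const

lemma contDiff_pt {m n : WithTop ℕ∞} (hf : ContDiff ℝ n (uncurry f)) (hmn : m + 1 ≤ n) :
    ContDiff ℝ m (uncurry (pt f)) := by
  have hn : n ≠ 0 := (one_pos.trans_le (le_add_self.trans hmn)).ne'
  rw [uncurry_pt_eq_fderiv (hf.differentiable hn)]
  exact (hf.fderiv_right hmn).clm_apply contDiff_const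

lemma differentiable_pr (hf : ContDiff ℝ 2 (uncurry f)) : Differentiable ℝ (uncurry (pr f)) :=
  (contDiff_pr (m := 1) hf (by norm_num)).differentiable one_ne_zero

lemma differentiable_pt (hf : ContDiff ℝ 2 (uncurry f)) : Differentiable ℝ (uncurry (pt f)) :=
  (contDiff_pt (m := 1) hf (by norm_num)).differentiable one_ne_zero

lemma pt_pr_comm (hf : ContDiff ℝ 2 (uncurry f)) : pt (pr f) = pr (pt f) := by
  funext r t
  have hd : Differentiable ℝ (uncurry f) := hf.differentiable two_ne_zero
  have hd' : DifferentiableAt ℝ (fderiv ℝ (uncurry f)) (r, t) :=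
    (hf.fderiv_right (m := 1) (by norm_num)).differentiable one_ne_zero _
  have hsymm : IsSymmSndFDerivAt ℝ (uncurry f) (r, t) :=
    hf.contDiffAt.isSymmSndFDerivAt (by simp)
  calc pt (pr f) r t = fderiv ℝ (uncurry (pr f)) (r, t) (0, 1) :=
        (hasDerivAt_fderiv_snd (differentiable_pr hf) r t).deriv
    _ = fderiv ℝ (fderiv ℝ (uncurry f)) (r, t) (0, 1) (1, 0) := by
        rw [uncurry_pr_eq_fderiv hd, fderiv_clm_apply hd' (by fun_prop)]
        simp
    _ = fderiv ℝ (fderiv ℝ (uncurry f)) (r, t) (1, 0) (0, 1) := hsymm.eq _ _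
    _ = fderiv ℝ (uncurry (pt f)) (r, t) (1, 0) := by
        rw [uncurry_pt_eq_fderiv hd, fderiv_clm_apply hd' (by fun_prop)]
        simp
    _ = pr (pt f) r t := ((hasDerivAt_fderiv_fst (differentiable_pt hf) r t).deriv).symm

lemma pr_sub (hf : Differentiable ℝ (uncurry f)) (hg : Differentiable ℝ (uncurry g)) :
    pr (f - g) = pr f - pr g :=
  funext₂ fun r t => ((hasDerivAt_pr hf r t).sub (hasDerivAt_pr hg r t)).deriv

lemma pt_sub (hf : Differentiable ℝ (uncurry f)) (hg : Differentiable ℝ (uncurry g)) :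
    pt (f - g) = pt f - pt g :=
  funext₂ fun r t => ((hasDerivAt_pt hf r t).sub (hasDerivAt_pt hg r t)).deriv

end PartialDerivatives

section MinimumTests

lemma mul_nonneg_of_isMinOn_of_hasDerivAt {f : ℝ → ℝ} {f' x y : ℝ} {S : Set ℝ} (hS : Convex ℝ S)
    (hx : x ∈ S) (hy : y ∈ S) (hmin : IsMinOn f S x) (hf : HasDerivAt f f' x) :
    0 ≤ (y - x) * f' := by
  simpa using hmin.localize.hasFDerivWithinAt_nonneg hf.hasFDerivAt.hasFDerivWithinAt
    (sub_mem_posTangentConeAt_of_segment_subset (hS.segment_subset hx hy))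

lemma deriv_deriv_nonneg_of_isLocalMin {f : ℝ → ℝ} {x : ℝ} (hmin : IsLocalMin f x)
    (hf : ContinuousAt f x) : 0 ≤ deriv (deriv f) x := by
  by_contra! hneg
  have hmax : IsLocalMax f x := isLocalMax_of_deriv_deriv_neg hneg hmin.deriv_eq_zero hf
  have hconst : f =ᶠ[nhds x] fun _ => f x := by
    filter_upwards [hmin, hmax] with y h₁ h₂ using le_antisymm h₂ h₁
  have hzero : deriv (deriv f) x = 0 := by simp [hconst.deriv.deriv_eq]
  exact hneg.ne hzero

variable {θ θ' f f' : ℝ → ℝ} {θ₁ θ₂ f₁ f₂ x y : ℝ} {S : Set ℝ}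

lemma hasDerivAt_exp_neg_mul (hθ : HasDerivAt θ θ₁ x) (hf : HasDerivAt f f₁ x) :
    HasDerivAt (fun y => exp (-θ y) * f y) (exp (-θ x) * (f₁ - θ₁ * f x)) x :=
  (hθ.neg.exp.mul hf).congr_deriv (by simp only [Pi.neg_apply]; ring)

lemma mul_sub_nonneg_of_isMinOn_exp_neg_mul (hS : Convex ℝ S) (hx : x ∈ S) (hy : y ∈ S)
    (hmin : IsMinOn (fun y => exp (-θ y) * f y) S x) (hθ : HasDerivAt θ θ₁ x)
    (hf : HasDerivAt f f₁ x) : 0 ≤ (y - x) * (f₁ - θ₁ * f x) := by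
  have h := mul_nonneg_of_isMinOn_of_hasDerivAt hS hx hy hmin (hasDerivAt_exp_neg_mul hθ hf)
  rw [mul_left_comm] at h
  exact nonneg_of_mul_nonneg_right h (exp_pos _)

lemma eq_mul_of_isLocalMin_exp_neg_mul (hmin : IsLocalMin (fun y => exp (-θ y) * f y) x)
    (hθ : HasDerivAt θ θ₁ x) (hf : HasDerivAt f f₁ x) : f₁ = θ₁ * f x := by
  have h := hmin.hasDerivAt_eq_zero (hasDerivAt_exp_neg_mul hθ hf)
  exact sub_eq_zero.1 ((mul_eq_zero.1 h).resolve_left (exp_pos _).ne')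

lemma mul_le_of_isLocalMin_exp_neg_mul (hmin : IsLocalMin (fun y => exp (-θ y) * f y) x)
    (hθ : ∀ y, HasDerivAt θ (θ' y) y) (hθ' : HasDerivAt θ' θ₂ x)
    (hf : ∀ y, HasDerivAt f (f' y) y) (hf' : HasDerivAt f' f₂ x) :
    (θ₂ + θ' x ^ 2) * f x ≤ f₂ := by
  have hfirst : deriv (fun y => exp (-θ y) * f y) = fun y => exp (-θ y) * (f' y - θ' y * f y) :=
    funext fun y => (hasDerivAt_exp_neg_mul (hθ y) (hf y)).deriv
  have hsecond := deriv_deriv_nonneg_of_isLocalMin hmin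
    (hasDerivAt_exp_neg_mul (hθ x) (hf x)).continuousAt
  have hbracket : HasDerivAt (fun y => f' y - θ' y * f y) (f₂ - (θ₂ * f x + θ' x * f' x)) x :=
    hf'.sub (hθ'.mul (hf x))
  rw [hfirst, (hasDerivAt_exp_neg_mul (hθ x) hbracket).deriv] at hsecond
  have hcrit : f' x = θ' x * f x := eq_mul_of_isLocalMin_exp_neg_mul hmin (hθ x) (hf x)
  have hnonneg := nonneg_of_mul_nonneg_right hsecond (exp_pos _)
  rw [hcrit] at hnonneg
  linarith

end MinimumTests

/-- The data of the linear parabolic problem `∂ₜv = a (∂ᵣ²v + b ∂ᵣv) + c v` on `0 < r < R`, with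
`∂ᵣv = 0` at `r = 0` and the Robin condition `∂ᵣv = κ + γ v` at `r = R`; here `a`, `b`, `c`, `γ`,
`κ` are `diffusion`, `drift`, `potential`, `robin`, `flux`. The drift may blow up like `1 / r` at
the origin, as it does for rotationally symmetric Laplacians. -/
structure RadialProblem (R : ℝ) where
  diffusion : ℝ → ℝ → ℝ
  drift : ℝ → ℝ
  potential : ℝ → ℝ → ℝ
  robin : ℝ → ℝ
  flux : ℝ → ℝ
  radius_pos : 0 < R
  continuous_diffusion : Continuous (uncurry diffusion)
  diffusion_pos : ∀ r t, 0 < diffusion r t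
  drift_nonneg : ∀ r ∈ Ioo 0 R, 0 ≤ drift r
  exists_mul_drift_le : ∃ D, ∀ r ∈ Ioo 0 R, r * drift r ≤ D
  continuous_potential : Continuous (uncurry potential)
  continuous_robin : Continuous robin
  continuous_flux : Continuous flux

namespace RadialProblem

variable {R s τ : ℝ} {v φ : ℝ → ℝ → ℝ} (P : RadialProblem R)

/-- The spatial operator `a (∂ᵣ²v + b ∂ᵣv) + c v`. -/
noncomputable def operator (v : ℝ → ℝ → ℝ) (r t : ℝ) : ℝ :=
  P.diffusion r t * (pr (pr v) r t + P.drift r * pr v r t) + P.potential r t * v r t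

lemma operator_sub (hv : ContDiff ℝ 2 (uncurry v)) (hφ : ContDiff ℝ 2 (uncurry φ)) (r t : ℝ) :
    P.operator (v - φ) r t = P.operator v r t - P.operator φ r t := by
  simp only [operator, Pi.sub_apply,
    pr_sub (hv.differentiable two_ne_zero) (hφ.differentiable two_ne_zero),
    pr_sub (differentiable_pr hv) (differentiable_pr hφ)]
  ring

/-- A classical supersolution of the problem on `[0, R] × (s, τ]`. -/
structure IsSupersolution (s τ : ℝ) (v : ℝ → ℝ → ℝ) : Prop where
  contDiff : ContDiff ℝ 2 (uncurry v)
  origin : ∀ t ∈ Ioc s τ, pr v 0 t ≤ 0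
  boundary : ∀ t ∈ Ioc s τ, P.flux t + P.robin t * v R t ≤ pr v R t
  evolution : ∀ r ∈ Ioo 0 R, ∀ t ∈ Ioc s τ, P.operator v r t ≤ pt v r t

/-- A lower barrier `φ` for `v` on `[0, R] × [s, τ]`: it starts below `v` at time `s` and is a
subsolution, where the differential inequality and the Robin condition are only required at points
at which `φ` exceeds `v`. -/
structure IsLowerBarrier (s τ : ℝ) (v φ : ℝ → ℝ → ℝ) : Prop where
  contDiff : ContDiff ℝ 2 (uncurry φ)
  initial : ∀ r ∈ Icc 0 R, φ r s ≤ v r s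
  origin : ∀ t ∈ Ioc s τ, 0 ≤ pr φ 0 t
  boundary : ∀ t ∈ Ioc s τ, v R t < φ R t → pr φ R t ≤ P.flux t + P.robin t * φ R t
  evolution : ∀ r ∈ Ioo 0 R, ∀ t ∈ Ioc s τ, v r t < φ r t → pt φ r t ≤ P.operator φ r t

section Comparison

/-- The exponent `θ` of the factor `e^{-θ}` used in the comparison principle. It is centred at
`R / 2` so that, for `B > 0`, it decreases at `r = 0` and increases at `r = R`. -/
noncomputable def weight (R A B r t : ℝ) : ℝ := A * t + B * (r - R / 2) ^ 2

lemma continuous_weight (R A B : ℝ) : Continuous (uncurry (weight R A B)) := by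
  unfold weight uncurry
  fun_prop

lemma hasDerivAt_weight_fst (R A B r t : ℝ) :
    HasDerivAt (fun x => weight R A B x t) (2 * B * (r - R / 2)) r :=
  (((((hasDerivAt_id r).sub_const (R / 2)).pow 2).const_mul B).const_add (A * t)).congr_deriv
    (by simp; ring)

lemma hasDerivAt_weight_snd (R A B r t : ℝ) :
    HasDerivAt (fun x => weight R A B r x) A t :=
  (((hasDerivAt_id t).const_mul A).add_const (B * (r - R / 2) ^ 2)).congr_deriv (mul_one A)

lemma hasDerivAt_two_mul_sub (R B r : ℝ) :
    HasDerivAt (fun x => 2 * B * (x - R / 2)) (2 * B) r := by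
  simpa using ((hasDerivAt_id r).sub_const (R / 2)).const_mul (2 * B)

lemma isCompact_cylinder (R s τ : ℝ) : IsCompact (Icc 0 R ×ˢ Icc s τ) :=
  isCompact_Icc.prod isCompact_Icc

lemma exists_forall_le_of_continuous {f : ℝ → ℝ → ℝ} (hf : Continuous (uncurry f)) (R s τ : ℝ) :
    ∃ M, ∀ r ∈ Icc 0 R, ∀ t ∈ Icc s τ, f r t ≤ M := by
  obtain ⟨M, hM⟩ := (isCompact_cylinder R s τ).bddAbove_image hf.continuousOn
  exact ⟨M, fun r hr t ht => hM ⟨(r, t), ⟨hr, ht⟩, rfl⟩⟩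

/-- The function `e^{-θ} L (e^θ)`, where `L` is the spatial `operator` and `θ` the `weight`. It does
not depend on the coefficient `A` of `t` in `θ`. -/
noncomputable def conjugatedPotential (B r t : ℝ) : ℝ :=
  P.diffusion r t * (2 * B + (2 * B * (r - R / 2)) ^ 2 + P.drift r * (2 * B * (r - R / 2))) +
    P.potential r t

lemma exists_conjugatedPotential_lt {B : ℝ} (hB : 0 ≤ B) (s τ : ℝ) :
    ∃ A, ∀ r ∈ Ioo 0 R, ∀ t ∈ Icc s τ, P.conjugatedPotential B r t < A := by
  obtain ⟨a, ha⟩ := exists_forall_le_of_continuous P.continuous_diffusion R s τ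
  obtain ⟨c, hc⟩ := exists_forall_le_of_continuous P.continuous_potential R s τ
  obtain ⟨D, hD⟩ := P.exists_mul_drift_le
  refine ⟨a * (2 * B + (B * R) ^ 2 + 2 * B * |D|) + c + 1, fun r hr t ht => ?_⟩
  have hr' : r ∈ Icc 0 R := Ioo_subset_Icc_self hr
  have hsq : (2 * B * (r - R / 2)) ^ 2 ≤ (B * R) ^ 2 :=
    sq_le_sq' (by nlinarith [hr.1]) (by nlinarith [hr.2])
  have hdrift : P.drift r * (2 * B * (r - R / 2)) ≤ 2 * B * |D| := calc
    P.drift r * (2 * B * (r - R / 2)) ≤ P.drift r * (2 * B * r) := by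
        have := P.drift_nonneg r hr
        gcongr
        linarith [P.radius_pos]
    _ = 2 * B * (r * P.drift r) := by ring
    _ ≤ 2 * B * |D| := by
        gcongr
        exact (hD r hr).trans (le_abs_self D)
  have hdiffusion := calc
    P.diffusion r t * (2 * B + (2 * B * (r - R / 2)) ^ 2 + P.drift r * (2 * B * (r - R / 2)))
      ≤ P.diffusion r t * (2 * B + (B * R) ^ 2 + 2 * B * |D|) :=
        mul_le_mul_of_nonneg_left (by linarith) (P.diffusion_pos r t).le
    _ ≤ a * (2 * B + (B * R) ^ 2 + 2 * B * |D|) :=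
        mul_le_mul_of_nonneg_right (ha r hr' t ht) (by positivity)
  rw [conjugatedPotential]
  linarith [hc r hr' t ht]

lemma exists_robin_lt_mul (s τ : ℝ) : ∃ B > 0, ∀ t ∈ Icc s τ, P.robin t < B * R := by
  have hR := P.radius_pos
  obtain ⟨Γ, hΓ⟩ := isCompact_Icc.bddAbove_image (P.continuous_robin.continuousOn (s := Icc s τ))
  refine ⟨(|Γ| + 1) / R, by positivity, fun t ht => ?_⟩
  rw [div_mul_cancel₀ _ hR.ne']
  linarith [hΓ (mem_image_of_mem _ ht), le_abs_self Γ]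

/-- `(r, t)` minimizes `e^{-θ} w` over the cylinder `[0, R] × [s, τ]`, where `θ` is the `weight`. -/
def IsWeightedMin (R A B s τ : ℝ) (w : ℝ → ℝ → ℝ) (r t : ℝ) : Prop :=
  ∀ p ∈ Icc 0 R ×ˢ Icc s τ,
    exp (-weight R A B r t) * w r t ≤ exp (-weight R A B p.1 p.2) * w p.1 p.2

variable {P} {w : ℝ → ℝ → ℝ} {A B r t : ℝ}

lemma IsWeightedMin.pt_le (hw : Differentiable ℝ (uncurry w)) (hr : r ∈ Icc 0 R)
    (ht : t ∈ Ioc s τ) (hmin : IsWeightedMin R A B s τ w r t) : pt w r t ≤ A * w r t := by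
  have ht' : t ∈ Icc s τ := Ioc_subset_Icc_self ht
  have hslice : IsMinOn (fun x => exp (-weight R A B r x) * w r x) (Icc s τ) t :=
    fun x hx => hmin (r, x) ⟨hr, hx⟩
  have h := mul_sub_nonneg_of_isMinOn_exp_neg_mul (convex_Icc s τ) ht'
    (left_mem_Icc.2 (ht'.1.trans ht'.2)) hslice (hasDerivAt_weight_snd R A B r t)
    (hasDerivAt_pt hw r t)
  linarith [nonpos_of_mul_nonneg_right h (sub_neg.2 ht.1)]

lemma IsWeightedMin.mul_pr_sub_nonneg (hw : Differentiable ℝ (uncurry w)) {y : ℝ}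
    (hr : r ∈ Icc 0 R) (hy : y ∈ Icc 0 R) (ht : t ∈ Icc s τ)
    (hmin : IsWeightedMin R A B s τ w r t) :
    0 ≤ (y - r) * (pr w r t - 2 * B * (r - R / 2) * w r t) := by
  have hslice : IsMinOn (fun x => exp (-weight R A B x t) * w x t) (Icc 0 R) r :=
    fun x hx => hmin (x, t) ⟨hx, ht⟩
  exact mul_sub_nonneg_of_isMinOn_exp_neg_mul (convex_Icc 0 R) hr hy hslice
    (hasDerivAt_weight_fst R A B r t) (hasDerivAt_pr hw r t)

lemma IsWeightedMin.neg_le_pr_origin (hR : 0 < R) (hw : Differentiable ℝ (uncurry w))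
    (ht : t ∈ Icc s τ) (hmin : IsWeightedMin R A B s τ w 0 t) : -(B * R * w 0 t) ≤ pr w 0 t := by
  have h := hmin.mul_pr_sub_nonneg hw (left_mem_Icc.2 hR.le) (right_mem_Icc.2 hR.le) ht
  rw [sub_zero] at h
  linarith [nonneg_of_mul_nonneg_right h hR]

lemma IsWeightedMin.pr_boundary_le (hR : 0 < R) (hw : Differentiable ℝ (uncurry w))
    (ht : t ∈ Icc s τ) (hmin : IsWeightedMin R A B s τ w R t) : pr w R t ≤ B * R * w R t := by
  have h := hmin.mul_pr_sub_nonneg hw (right_mem_Icc.2 hR.le) (left_mem_Icc.2 hR.le) ht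
  rw [zero_sub, neg_mul, ← mul_neg] at h
  linarith [nonneg_of_mul_nonneg_right h hR]

lemma IsWeightedMin.pt_lt_operator (hw : ContDiff ℝ 2 (uncurry w)) (hr : r ∈ Ioo 0 R)
    (ht : t ∈ Ioc s τ) (hneg : w r t < 0)
    (hA : P.conjugatedPotential B r t < A) (hmin : IsWeightedMin R A B s τ w r t) :
    pt w r t < P.operator w r t := by
  have hd : Differentiable ℝ (uncurry w) := hw.differentiable two_ne_zero
  have hlocal : IsLocalMin (fun x => exp (-weight R A B x t) * w x t) r := by
    filter_upwards [Ioo_mem_nhds hr.1 hr.2] with x hx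
    exact hmin (x, t) ⟨Ioo_subset_Icc_self hx, Ioc_subset_Icc_self ht⟩
  have hfirst : pr w r t = 2 * B * (r - R / 2) * w r t :=
    eq_mul_of_isLocalMin_exp_neg_mul (f := fun x => w x t) hlocal
      (hasDerivAt_weight_fst R A B r t) (hasDerivAt_pr hd r t)
  have hsecond : (2 * B + (2 * B * (r - R / 2)) ^ 2) * w r t ≤ pr (pr w) r t :=
    mul_le_of_isLocalMin_exp_neg_mul (f := fun x => w x t) hlocal
      (fun x => hasDerivAt_weight_fst R A B x t) (hasDerivAt_two_mul_sub R B r)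
      (fun x => hasDerivAt_pr hd x t) (hasDerivAt_pr (differentiable_pr hw) r t)
  calc pt w r t ≤ A * w r t := hmin.pt_le hd (Ioo_subset_Icc_self hr) ht
    _ < P.conjugatedPotential B r t * w r t := mul_lt_mul_of_neg_right hA hneg
    _ = P.diffusion r t * ((2 * B + (2 * B * (r - R / 2)) ^ 2) * w r t +
          P.drift r * pr w r t) + P.potential r t * w r t := by
        rw [hfirst, conjugatedPotential]
        ring
    _ ≤ P.operator w r t := by
        unfold operator
        have := (P.diffusion_pos r t).le
        gcongr

lemma exists_neg_isWeightedMin (A B : ℝ) (hw : Continuous (uncurry w)) (hr : r ∈ Icc 0 R)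
    (ht : t ∈ Icc s τ) (hneg : w r t < 0) :
    ∃ r₁ ∈ Icc 0 R, ∃ t₁ ∈ Icc s τ, w r₁ t₁ < 0 ∧ IsWeightedMin R A B s τ w r₁ t₁ := by
  obtain ⟨⟨r₁, t₁⟩, ⟨hr₁, ht₁⟩, hmin⟩ := (isCompact_cylinder R s τ).exists_isMinOn
    ⟨(r, t), hr, ht⟩ ((continuous_weight R A B).neg.rexp.mul hw).continuousOn
  have hmin' : IsWeightedMin R A B s τ w r₁ t₁ := fun p hp => hmin hp
  have hlt : exp (-weight R A B r₁ t₁) * w r₁ t₁ < 0 :=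
    (hmin' (r, t) ⟨hr, ht⟩).trans_lt (mul_neg_of_pos_of_neg (exp_pos _) hneg)
  exact ⟨r₁, hr₁, t₁, ht₁, neg_of_mul_neg_right hlt (exp_pos _).le, hmin'⟩

theorem IsSupersolution.le_of_isLowerBarrier (hv : P.IsSupersolution s τ v)
    (hφ : P.IsLowerBarrier s τ v φ) : ∀ r ∈ Icc 0 R, ∀ t ∈ Icc s τ, φ r t ≤ v r t := by
  by_contra! ⟨r₀, hr₀, t₀, ht₀, hlt⟩
  have hR := P.radius_pos
  obtain ⟨B, hB, hrobin⟩ := P.exists_robin_lt_mul s τ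
  obtain ⟨A, hA⟩ := P.exists_conjugatedPotential_lt hB.le s τ
  have hw : ContDiff ℝ 2 (uncurry (v - φ)) := hv.contDiff.sub hφ.contDiff
  have hdw : Differentiable ℝ (uncurry (v - φ)) := hw.differentiable two_ne_zero
  have hdv : Differentiable ℝ (uncurry v) := hv.contDiff.differentiable two_ne_zero
  have hdφ : Differentiable ℝ (uncurry φ) := hφ.contDiff.differentiable two_ne_zero
  obtain ⟨r, hr, t, ht, hneg, hmin⟩ :=
    exists_neg_isWeightedMin A B hw.continuous hr₀ ht₀ (sub_neg.2 hlt)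
  have hexceeds : v r t < φ r t := sub_neg.1 hneg
  have hst : t ∈ Ioc s τ := by
    refine ⟨ht.1.lt_of_ne ?_, ht.2⟩
    rintro rfl
    exact (hφ.initial r hr).not_gt hexceeds
  rcases hr.1.eq_or_lt' with rfl | h0
  · have hslope := hmin.neg_le_pr_origin hR hdw ht
    simp only [pr_sub hdv hdφ, Pi.sub_apply] at hslope hneg
    linarith [hv.origin t hst, hφ.origin t hst, mul_neg_of_pos_of_neg (mul_pos hB hR) hneg]
  rcases hr.2.eq_or_lt with hrR | h1
  · rw [hrR] at hmin hneg hexceeds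
    have hslope := hmin.pr_boundary_le hR hdw ht
    have hstrict := mul_lt_mul_of_neg_right (hrobin t ht) hneg
    simp only [pr_sub hdv hdφ, Pi.sub_apply] at hslope hstrict
    linarith [hv.boundary t hst, hφ.boundary t hst hexceeds]
  · have hlt := hmin.pt_lt_operator hw ⟨h0, h1⟩ hst hneg (hA r ⟨h0, h1⟩ t ht)
    simp only [P.operator_sub hv.contDiff hφ.contDiff, pt_sub hdv hdφ, Pi.sub_apply] at hlt
    linarith [hv.evolution r ⟨h0, h1⟩ t hst, hφ.evolution r ⟨h0, h1⟩ t hst hexceeds]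

end Comparison

variable {P}

theorem IsSupersolution.nonneg (hv : P.IsSupersolution s τ v) (hinit : ∀ r ∈ Icc 0 R, 0 ≤ v r s)
    (hflux : ∀ t ∈ Ioc s τ, 0 ≤ P.flux t) : ∀ r ∈ Icc 0 R, ∀ t ∈ Icc s τ, 0 ≤ v r t :=
  hv.le_of_isLowerBarrier (φ := fun _ _ => 0)
    { contDiff := contDiff_const
      initial := hinit
      origin := fun _ _ => by simp [pr]
      boundary := fun t ht _ => by simpa [pr] using hflux t ht
      evolution := fun _ _ _ _ _ => by simp [operator, pr, pt] }

section Positivity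

/-- The comparison functions `m e^{α (r - R) + β (t - s)} - κ` used as lower barriers. -/
noncomputable def expBarrier (R s m α β κ r t : ℝ) : ℝ := m * exp (α * (r - R) + β * (t - s)) - κ

lemma contDiff_expBarrier (R s m α β κ : ℝ) : ContDiff ℝ 2 (uncurry (expBarrier R s m α β κ)) := by
  unfold expBarrier uncurry
  fun_prop

lemma pr_expBarrier (R s m α β κ : ℝ) :
    pr (expBarrier R s m α β κ) = expBarrier R s (m * α) α β 0 := by
  funext r t
  have hexp := (((hasDerivAt_id r).sub_const R).const_mul α).add_const (β * (t - s))
  refine ((hexp.exp.const_mul m).sub_const κ).deriv.trans ?_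
  simp only [expBarrier, id_eq]
  ring

lemma pt_expBarrier (R s m α β κ : ℝ) :
    pt (expBarrier R s m α β κ) = expBarrier R s (m * β) α β 0 := by
  funext r t
  have hexp := (((hasDerivAt_id t).sub_const s).const_mul β).const_add (α * (r - R))
  refine ((hexp.exp.const_mul m).sub_const κ).deriv.trans ?_
  simp only [expBarrier, id_eq]
  ring

variable {m α β κ a K : ℝ}

lemma pt_expBarrier_le_operator {r t : ℝ} (hm : 0 ≤ m) (hα : 0 ≤ α) (hκ : 0 ≤ κ)
    (ha : a ≤ P.diffusion r t) (hdrift : 0 ≤ P.drift r) (hK : 0 ≤ K) (hc : -K ≤ P.potential r t)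
    (hβ : β + K ≤ a * α ^ 2) (hpos : 0 < expBarrier R s m α β κ r t) :
    pt (expBarrier R s m α β κ) r t ≤ P.operator (expBarrier R s m α β κ) r t := by
  simp only [operator, pr_expBarrier, pt_expBarrier]
  simp only [expBarrier, sub_zero] at hpos ⊢
  set E := exp (α * (r - R) + β * (t - s))
  have hmE : 0 ≤ m * E := mul_nonneg hm (exp_pos _).le
  have hd := P.diffusion_pos r t
  have hfirstOrder : 0 ≤ P.diffusion r t * (P.drift r * (m * α * E)) := by
    rw [mul_right_comm]
    positivity
  have hsecondOrder : a * α ^ 2 * (m * E) ≤ P.diffusion r t * α ^ 2 * (m * E) := by gcongr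
  have hzerothOrder : -K * (m * E) ≤ P.potential r t * (m * E - κ) := calc
    -K * (m * E) ≤ -K * (m * E - κ) := by nlinarith
    _ ≤ P.potential r t * (m * E - κ) := by gcongr
  linarith [mul_le_mul_of_nonneg_right hβ hmE]

lemma isLowerBarrier_expBarrier (hv : ∀ r ∈ Icc 0 R, ∀ t ∈ Icc s τ, 0 ≤ v r t)
    (hinit : ∀ r ∈ Icc 0 R, expBarrier R s m α β κ r s ≤ v r s)
    (hm : 0 ≤ m) (hα : 0 ≤ α) (hκ : 0 ≤ κ)
    (ha : ∀ r ∈ Icc 0 R, ∀ t ∈ Icc s τ, a ≤ P.diffusion r t) (hK : 0 ≤ K)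
    (hc : ∀ r ∈ Icc 0 R, ∀ t ∈ Icc s τ, -K ≤ P.potential r t) (hβ : β + K ≤ a * α ^ 2)
    (hrobin : ∀ t ∈ Ioc s τ, 0 ≤ P.robin t)
    (hflux : ∀ t ∈ Ioc s τ, m * α * exp (β * (t - s)) ≤ P.flux t) :
    P.IsLowerBarrier s τ v (expBarrier R s m α β κ) where
  contDiff := contDiff_expBarrier R s m α β κ
  initial := hinit
  origin t _ := by
    simp only [pr_expBarrier, expBarrier, sub_zero]
    positivity
  boundary t ht hlt := by
    have hpos : 0 ≤ expBarrier R s m α β κ R t :=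
      (hv R (right_mem_Icc.2 P.radius_pos.le) t (Ioc_subset_Icc_self ht)).trans hlt.le
    have hslope : pr (expBarrier R s m α β κ) R t = m * α * exp (β * (t - s)) := by
      simp [pr_expBarrier, expBarrier]
    rw [hslope]
    exact (hflux t ht).trans (le_add_of_nonneg_right (mul_nonneg (hrobin t ht) hpos))
  evolution r hr t ht hlt := by
    have hr' := Ioo_subset_Icc_self hr
    have ht' := Ioc_subset_Icc_self ht
    exact pt_expBarrier_le_operator hm hα hκ (ha r hr' t ht') (P.drift_nonneg r hr) hK
      (hc r hr' t ht') hβ ((hv r hr' t ht').trans_lt hlt)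

variable (P) in
lemma exists_pos_le_diffusion (s τ : ℝ) :
    ∃ a > 0, ∀ r ∈ Icc 0 R, ∀ t ∈ Icc s τ, a ≤ P.diffusion r t := by
  obtain ⟨a, ha, hle⟩ := (isCompact_cylinder R s τ).exists_forall_le'
    P.continuous_diffusion.continuousOn fun p _ => P.diffusion_pos p.1 p.2
  exact ⟨a, ha, fun r hr t ht => hle (r, t) ⟨hr, ht⟩⟩

variable (P) in
lemma exists_neg_le_potential (s τ : ℝ) :
    ∃ K ≥ 0, ∀ r ∈ Icc 0 R, ∀ t ∈ Icc s τ, -K ≤ P.potential r t := by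
  obtain ⟨M, hM⟩ := exists_forall_le_of_continuous (f := -P.potential)
    P.continuous_potential.neg R s τ
  exact ⟨|M|, abs_nonneg M, fun r hr t ht => neg_le.1 ((hM r hr t ht).trans (le_abs_self M))⟩

theorem IsSupersolution.pos_of_initial_pos (hv : P.IsSupersolution s τ v)
    (hinit : ∀ r ∈ Icc 0 R, 0 < v r s) (hrobin : ∀ t ∈ Ioc s τ, 0 ≤ P.robin t)
    (hflux : ∀ t ∈ Ioc s τ, 0 ≤ P.flux t) : ∀ r ∈ Icc 0 R, ∀ t ∈ Icc s τ, 0 < v r t := by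
  have hv₀ := hv.nonneg (fun r hr => (hinit r hr).le) hflux
  have hcont : Continuous fun r => v r s := hv.contDiff.continuous.comp (.prodMk_left s)
  obtain ⟨m, hm, hle⟩ := isCompact_Icc.exists_forall_le' hcont.continuousOn hinit
  obtain ⟨K, hK, hc⟩ := P.exists_neg_le_potential s τ
  have hbarrier : P.IsLowerBarrier s τ v (expBarrier R s m 0 (-K) 0) :=
    isLowerBarrier_expBarrier hv₀ (fun r hr => by simpa [expBarrier] using hle r hr) hm.le le_rfl
      le_rfl (fun r _ t _ => (P.diffusion_pos r t).le) hK hc (by simp) hrobin (by simpa using hflux)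
  intro r hr t ht
  refine lt_of_lt_of_le ?_ (hv.le_of_isLowerBarrier hbarrier r hr t ht)
  rw [expBarrier, sub_zero]
  positivity

lemma exists_mul_add_le_mul_sq {a K σ : ℝ} (ha : 0 < a) (hK : 0 ≤ K) (hσ : 0 < σ) :
    ∃ α > 0, α * σ + K ≤ a * α ^ 2 := by
  have hquot : 0 ≤ (σ + K) / a := by positivity
  refine ⟨1 + (σ + K) / a, by positivity, ?_⟩
  set α := 1 + (σ + K) / a with hα
  calc α * σ + K ≤ α * (σ + K) := by nlinarith
    _ ≤ α * (a * α) := by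
        gcongr
        rw [hα, mul_add, mul_div_cancel₀ _ ha.ne']
        linarith
    _ = a * α ^ 2 := by ring

theorem IsSupersolution.pos_of_flux_pos (hv : P.IsSupersolution s τ v) (hsτ : s < τ)
    (hinit : ∀ r ∈ Icc 0 R, 0 ≤ v r s) (hrobin : ∀ t ∈ Ioc s τ, 0 ≤ P.robin t)
    (hflux : ∀ t ∈ Icc s τ, 0 < P.flux t) : ∀ r ∈ Icc 0 R, 0 < v r τ := by
  have hR := P.radius_pos
  have hδ : 0 < τ - s := sub_pos.2 hsτ
  have hv₀ := hv.nonneg hinit fun t ht => (hflux t (Ioc_subset_Icc_self ht)).le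
  obtain ⟨a, ha, hda⟩ := P.exists_pos_le_diffusion s τ
  obtain ⟨K, hK, hc⟩ := P.exists_neg_le_potential s τ
  obtain ⟨q, hq, hqflux⟩ := isCompact_Icc.exists_forall_le' P.continuous_flux.continuousOn hflux
  -- With this speed the barrier's zero, which starts at `r = R`, has reached `r = -1` at time `τ`.
  set σ := (R + 1) / (τ - s)
  have hσδ : σ * (τ - s) = R + 1 := div_mul_cancel₀ _ hδ.ne'
  have hσ_pos : 0 < σ := by positivity
  obtain ⟨α, hα, hβ⟩ := exists_mul_add_le_mul_sq ha hK hσ_pos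
  set ε := q / (α * exp (α * (R + 1))) with hε
  have hε_pos : 0 < ε := by positivity
  have hbarrier : P.IsLowerBarrier s τ v (expBarrier R s ε α (α * σ) ε) := by
    refine isLowerBarrier_expBarrier hv₀ (fun r hr => ?_) hε_pos.le hα.le hε_pos.le hda hK hc hβ
      hrobin fun t ht => ?_
    · have hexp : exp (α * (r - R)) ≤ 1 :=
        exp_le_one_iff.2 (mul_nonpos_of_nonneg_of_nonpos hα.le (sub_nonpos.2 hr.2))
      simp only [expBarrier, sub_self, mul_zero, add_zero]
      linarith [hinit r hr, mul_le_of_le_one_right hε_pos.le hexp]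
    · calc ε * α * exp (α * σ * (t - s)) ≤ ε * α * exp (α * σ * (τ - s)) := by
            gcongr
            exact ht.2
        _ = q := by rw [mul_assoc α, hσδ, hε]; field_simp
        _ ≤ P.flux t := hqflux t (Ioc_subset_Icc_self ht)
  intro r hr
  refine lt_of_lt_of_le ?_ (hv.le_of_isLowerBarrier hbarrier r hr τ (right_mem_Icc.2 hsτ.le))
  have hexponent : α * (r - R) + α * σ * (τ - s) = α * (r + 1) := by rw [mul_assoc α, hσδ]; ring
  have hexp : 1 < exp (α * (r + 1)) := one_lt_exp_iff.2 (mul_pos hα (by linarith [hr.1]))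
  rw [expBarrier, hexponent]
  linarith [lt_mul_of_one_lt_right hε_pos hexp]

end Positivity

end RadialProblem

lemma coth_pos {r : ℝ} (hr : 0 < r) : 0 < cosh r / sinh r :=
  div_pos (cosh_pos r) (sinh_pos_iff.2 hr)

lemma mul_coth_le_cosh {r : ℝ} (hr : 0 < r) : r * (cosh r / sinh r) ≤ cosh r := by
  rw [← mul_div_assoc, div_le_iff₀ (sinh_pos_iff.2 hr), mul_comm r]
  exact mul_le_mul_of_nonneg_left (self_le_sinh_iff.2 hr.le) (cosh_pos r).le

lemma eventually_nonneg_and_coe_lt {t : ℝ} {T : EReal} (h0 : 0 < t) (hT : (t : EReal) < T) :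
    ∀ᶠ τ : ℝ in nhds t, 0 ≤ τ ∧ (τ : EReal) < T := by
  filter_upwards [(continuous_coe_real_ereal.tendsto t).eventually_lt_const hT, lt_mem_nhds h0]
    with τ hτT h0τ using ⟨h0τ.le, hτT⟩

namespace Setup2

variable {r₀ t : ℝ} {T : EReal} {u : ℝ → ℝ → ℝ} {η : ℝ → ℝ}

lemma contDiff_two (S : Setup2 r₀ T u η) : ContDiff ℝ 2 (uncurry u) :=
  S.hu_smooth.of_le ENat.LEInfty.out

lemma contDiff_pt_two (S : Setup2 r₀ T u η) : ContDiff ℝ 2 (uncurry (pt u)) :=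
  contDiff_pt (n := 3) (S.hu_smooth.of_le ENat.LEInfty.out) (by norm_num)

lemma pt_zero_of_mem_Ioo (S : Setup2 r₀ T u η) {r : ℝ} (hr : r ∈ Ioo 0 r₀) : pt u r 0 = 0 := by
  have hu : EqOn (fun x => u x 0) (fun _ => 0) (Ioo 0 r₀) :=
    fun x hx => S.hu_init x (Ioo_subset_Icc_self hx)
  have hpr : EqOn (fun x => pr u x 0) (fun _ => 0) (Ioo 0 r₀) := by
    simpa [pr, EqOn, deriv_const'] using hu.deriv isOpen_Ioo
  have hprr : deriv (fun x => pr u x 0) r = 0 := by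
    simpa [deriv_const'] using hpr.deriv isOpen_Ioo hr
  have hevol := S.hu_evol r 0 (Ioo_subset_Ioc_self hr) le_rfl (by exact_mod_cast S.hT)
  rw [hprr, show pr u r 0 = 0 from hpr hr, show u r 0 = 0 from hu hr] at hevol
  simpa using hevol

lemma pt_zero (S : Setup2 r₀ T u η) {r : ℝ} (hr : r ∈ Icc 0 r₀) : pt u r 0 = 0 := by
  have hcont : Continuous fun x => pt u x 0 := S.contDiff_pt_two.continuous.comp (.prodMk_left 0)
  have hclosed : IsClosed {x | pt u x 0 = 0} := isClosed_eq hcont continuous_const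
  have hsub := closure_minimal (fun x hx => S.pt_zero_of_mem_Ioo hx) hclosed
  rw [closure_Ioo S.hr₀.ne] at hsub
  exact hsub hr

lemma pr_pt_origin (S : Setup2 r₀ T u η) (h0 : 0 < t) (hT : (t : EReal) < T) :
    pr (pt u) 0 t = 0 := by
  have hev : (fun τ => pr u 0 τ) =ᶠ[nhds t] fun _ => 0 := by
    filter_upwards [eventually_nonneg_and_coe_lt h0 hT] with τ hτ using S.hu_origin τ hτ.1 hτ.2
  rw [← pt_pr_comm S.contDiff_two]
  exact hev.deriv_eq.trans (deriv_const t 0)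

lemma pr_pt_boundary (S : Setup2 r₀ T u η) (h0 : 0 < t) (hT : (t : EReal) < T) :
    pr (pt u) r₀ t = deriv η t * exp (u r₀ t) + η t * exp (u r₀ t) * pt u r₀ t := by
  have hev : (fun τ => pr u r₀ τ) =ᶠ[nhds t] fun τ => η τ * exp (u r₀ τ) - cosh r₀ / sinh r₀ := by
    filter_upwards [eventually_nonneg_and_coe_lt h0 hT] with τ hτ using eq_sub_of_add_eq
      (S.hbdry τ hτ.1 hτ.2)
  have hη : HasDerivAt η (deriv η t) t :=
    (S.hη_smooth.differentiable two_ne_zero t).hasDerivAt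
  have hu := hasDerivAt_pt (S.contDiff_two.differentiable two_ne_zero) r₀ t
  rw [← pt_pr_comm S.contDiff_two]
  refine hev.deriv_eq.trans (((hη.mul hu.exp).sub_const (cosh r₀ / sinh r₀)).deriv.trans ?_)
  ring

lemma pt_pt_eq (S : Setup2 r₀ T u η) {r : ℝ} (hr : r ∈ Ioo 0 r₀) (h0 : 0 < t)
    (hT : (t : EReal) < T) :
    pt (pt u) r t = exp (-2 * u r t) *
      (pr (pr (pt u)) r t + cosh r / sinh r * pr (pt u) r t) +
        -2 * (pt u r t + 1) * pt u r t := by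
  have hu := S.contDiff_two
  have hpu : ContDiff ℝ 2 (uncurry (pr u)) :=
    contDiff_pr (n := 3) (S.hu_smooth.of_le ENat.LEInfty.out) (by norm_num)
  have hev : (fun τ => pt u r τ) =ᶠ[nhds t] fun τ => exp (-2 * u r τ) *
      (pr (pr u) r τ + cosh r / sinh r * pr u r τ + 1) - 1 := by
    filter_upwards [eventually_nonneg_and_coe_lt h0 hT] with τ hτ using
      S.hu_evol r τ (Ioo_subset_Ioc_self hr) hτ.1 hτ.2
  have h₀ := hasDerivAt_pt (hu.differentiable two_ne_zero) r t
  have h₁ := hasDerivAt_pt (hpu.differentiable two_ne_zero) r t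
  have h₂ := hasDerivAt_pt (differentiable_pr hpu) r t
  rw [pt_pr_comm hpu, pt_pr_comm hu] at h₂
  rw [pt_pr_comm hu] at h₁
  have hderiv := ((h₀.const_mul (-2)).exp.mul
    ((h₂.add (h₁.const_mul (cosh r / sinh r))).add_const 1)).sub_const 1
  refine hev.deriv_eq.trans (hderiv.deriv.trans ?_)
  simp only [Pi.add_apply]
  linear_combination (2 * pt u r t) * hev.self_of_nhds

lemma deriv_nonneg (S : Setup2 r₀ T u η) (ht : 0 ≤ t) : 0 ≤ deriv η t := by
  have hmono : MonotoneOn η (Ici 0) := fun x hx y _ hxy => S.hη_mono x y hx hxy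
  rw [← (S.hη_smooth.differentiable two_ne_zero t).derivWithin (uniqueDiffOn_Ici 0 t ht)]
  exact hmono.derivWithin_nonneg

lemma boundary_curvature_pos (S : Setup2 r₀ T u η) (ht : 0 ≤ t) : 0 < η t :=
  calc 0 < cosh r₀ / sinh r₀ := coth_pos S.hr₀
    _ = η 0 := S.hη_init.symm
    _ ≤ η t := S.hη_mono 0 t le_rfl ht

/-- The linear problem solved by `∂ₜu`, obtained by differentiating the flow and its boundary
condition in time. The nonlinear term `-2 (∂ₜu + 1) ∂ₜu` is read as a potential times `∂ₜu`. -/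
noncomputable def linearizedProblem (S : Setup2 r₀ T u η) : RadialProblem r₀ where
  diffusion r t := exp (-2 * u r t)
  drift r := cosh r / sinh r
  potential r t := -2 * (pt u r t + 1)
  robin t := η t * exp (u r₀ t)
  flux t := deriv η t * exp (u r₀ t)
  radius_pos := S.hr₀
  continuous_diffusion := (S.contDiff_two.continuous.const_smul (-2 : ℝ)).rexp
  diffusion_pos _ _ := exp_pos _
  drift_nonneg _ hr := (coth_pos hr.1).le
  exists_mul_drift_le := ⟨cosh r₀, fun r hr => (mul_coth_le_cosh hr.1).trans
    (cosh_le_cosh.2 (by rw [abs_of_pos hr.1, abs_of_pos S.hr₀]; exact hr.2.le))⟩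
  continuous_potential := (S.contDiff_pt_two.continuous.add continuous_const).const_smul (-2 : ℝ)
  continuous_robin := S.hη_smooth.continuous.mul
    (S.contDiff_two.continuous.comp (.prodMk_right r₀)).rexp
  continuous_flux := (S.hη_smooth.continuous_deriv one_le_two).mul
    (S.contDiff_two.continuous.comp (.prodMk_right r₀)).rexp

variable {s τ r : ℝ}

lemma isSupersolution_pt (S : Setup2 r₀ T u η) (hs : 0 ≤ s) (hτ : (τ : EReal) < T) :
    S.linearizedProblem.IsSupersolution s τ (pt u) := by
  have hpos : ∀ t ∈ Ioc s τ, 0 < t := fun t ht => hs.trans_lt ht.1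
  have hlt : ∀ t ∈ Ioc s τ, (t : EReal) < T :=
    fun t ht => (EReal.coe_le_coe_iff.2 ht.2).trans_lt hτ
  exact
    { contDiff := S.contDiff_pt_two
      origin := fun t ht => (S.pr_pt_origin (hpos t ht) (hlt t ht)).le
      boundary := fun t ht => (S.pr_pt_boundary (hpos t ht) (hlt t ht)).ge
      evolution := fun r hr t ht => (S.pt_pt_eq hr (hpos t ht) (hlt t ht)).ge }

lemma linearizedProblem_flux_nonneg (S : Setup2 r₀ T u η) (ht : 0 ≤ t) :
    0 ≤ S.linearizedProblem.flux t :=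
  mul_nonneg (S.deriv_nonneg ht) (exp_pos _).le

lemma linearizedProblem_robin_nonneg (S : Setup2 r₀ T u η) (ht : 0 ≤ t) :
    0 ≤ S.linearizedProblem.robin t :=
  mul_nonneg (S.boundary_curvature_pos ht).le (exp_pos _).le

theorem pt_nonneg (S : Setup2 r₀ T u η) (hr : r ∈ Icc 0 r₀) (ht : 0 ≤ t) (hT : (t : EReal) < T) :
    0 ≤ pt u r t :=
  (S.isSupersolution_pt le_rfl hT).nonneg (fun _ hr => (S.pt_zero hr).ge)
    (fun _ ht => S.linearizedProblem_flux_nonneg ht.1.le) r hr t (right_mem_Icc.2 ht)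

lemma pt_pos_of_deriv_pos (S : Setup2 r₀ T u η) (hs : 0 ≤ s) (hst : s < t) (hT : (t : EReal) < T)
    (hη : ∀ x ∈ Icc s t, 0 < deriv η x) (hr : r ∈ Icc 0 r₀) : 0 < pt u r t :=
  (S.isSupersolution_pt hs hT).pos_of_flux_pos hst
    (fun _ hr => S.pt_nonneg hr hs ((EReal.coe_lt_coe_iff.2 hst).trans hT))
    (fun _ hx => S.linearizedProblem_robin_nonneg (hs.trans hx.1.le))
    (fun x hx => mul_pos (hη x hx) (exp_pos _)) r hr

lemma pt_pos_of_pt_pos (S : Setup2 r₀ T u η) (hs : 0 ≤ s) (hst : s ≤ t) (hT : (t : EReal) < T)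
    (hinit : ∀ r ∈ Icc 0 r₀, 0 < pt u r s) (hr : r ∈ Icc 0 r₀) : 0 < pt u r t :=
  (S.isSupersolution_pt hs hT).pos_of_initial_pos hinit
    (fun _ hx => S.linearizedProblem_robin_nonneg (hs.trans hx.1.le))
    (fun _ hx => S.linearizedProblem_flux_nonneg (hs.trans hx.1.le)) r hr t (right_mem_Icc.2 hst)

theorem pt_pos (S : Setup2 r₀ T u η) (hr : r ∈ Icc 0 r₀) (ht : 0 < t) (hT : (t : EReal) < T) :
    0 < pt u r t := by
  obtain ⟨t₀, ht₀, hη⟩ := S.hη_incr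
  obtain ⟨τ, hτ, hτ'⟩ := exists_between (lt_min ht ht₀)
  have hτt : τ < t := hτ'.trans_le (min_le_left _ _)
  refine S.pt_pos_of_pt_pos hτ.le hτt.le hT (fun x hx => ?_) hr
  refine S.pt_pos_of_deriv_pos (half_pos hτ).le (half_lt_self hτ)
    ((EReal.coe_lt_coe_iff.2 hτt).trans hT) (fun y hy => ?_) hx
  exact hη y ((half_pos hτ).trans_le hy.1) (hy.2.trans_lt (hτ'.trans_le (min_le_right _ _)))

lemma K2_eq (S : Setup2 r₀ T u η) (hr : r ∈ Ioc 0 r₀) (ht : 0 ≤ t) (hT : (t : EReal) < T) :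
    K2 u r t = -1 - pt u r t := by
  rw [S.hu_evol r t hr ht hT, K2]
  ring

end Setup2

/-- `∂ₜu ≥ 0` on `[0,r₀] × [0,T)` and `∂ₜu > 0` on `[0,r₀] × (0,T)`;
equivalently, the Gauss curvature satisfies `K_{g(t)} ≤ -1` for `t ∈ [0,T)` and
`K_{g(t)} < -1` for `t ∈ (0,T)`. -/
theorem stmt_17 (r₀ : ℝ) (T : EReal) (u : ℝ → ℝ → ℝ) (η : ℝ → ℝ)
    (S : Setup2 r₀ T u η) :
    (∀ r t : ℝ, r ∈ Set.Icc 0 r₀ → 0 ≤ t → (t : EReal) < T → 0 ≤ pt u r t) ∧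
    (∀ r t : ℝ, r ∈ Set.Icc 0 r₀ → 0 < t → (t : EReal) < T → 0 < pt u r t) ∧
    (∀ r t : ℝ, r ∈ Set.Ioc 0 r₀ → 0 ≤ t → (t : EReal) < T → K2 u r t ≤ -1) ∧
    (∀ r t : ℝ, r ∈ Set.Ioc 0 r₀ → 0 < t → (t : EReal) < T → K2 u r t < -1) := by
  refine ⟨fun r t => S.pt_nonneg, fun r t => S.pt_pos, fun r t hr ht hT => ?_,
    fun r t hr ht hT => ?_⟩
  · rw [S.K2_eq hr ht hT]
    linarith [S.pt_nonneg (Set.Ioc_subset_Icc_self hr) ht hT]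
  · rw [S.K2_eq hr ht.le hT]
    linarith [S.pt_pos (Set.Ioc_subset_Icc_self hr) ht hT]
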